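/- Fix n ∈ ℕ. Let σ and η be maps sending each pair of n×n positive definite complex matrices to an n×n positive definite complex matrix, and let f, g, h : (0,∞) → (0,∞) be continuous functions. Define the adjoint operation σ*(A,B) = (σ(A⁻¹, B⁻¹))⁻¹ (and similarly η*), and the adjoint function f*(x) = 1/f(1/x) (and similarly g*, h*). Then the following are equivalent: (1) f(σ(A,B)) ≤ η(g(A), h(B)) for all positive definite A, B; (2) f*(σ*(A,B)) ≥ η*(g*(A), h*(B)) for all positive definite A, B. -/

import Mathlib

open Matrix
open scoped ComplexOrder

/-- The Loewner order on matrices: `A ≤ B` iff `B - A` is positive semidefinite. -/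
def MLE {n : ℕ} (A B : Matrix (Fin n) (Fin n) ℂ) : Prop := (B - A).PosSemidef

/-- The `t`-weighted harmonic mean `A !_t B = ((1-t)A⁻¹ + tB⁻¹)⁻¹`. -/
noncomputable def wharm {n : ℕ} (t : ℝ) (A B : Matrix (Fin n) (Fin n) ℂ) :
    Matrix (Fin n) (Fin n) ℂ := ((1 - t) • A⁻¹ + t • B⁻¹)⁻¹

/-- The `t`-weighted arithmetic mean `A ∇_t B = (1-t)A + tB`. -/
noncomputable def warith {n : ℕ} (t : ℝ) (A B : Matrix (Fin n) (Fin n) ℂ) :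
    Matrix (Fin n) (Fin n) ℂ := (1 - t) • A + t • B

/-- Real powers of a matrix, via the continuous functional calculus. -/
noncomputable def mpow {n : ℕ} (A : Matrix (Fin n) (Fin n) ℂ) (r : ℝ) :
    Matrix (Fin n) (Fin n) ℂ := cfc (fun x : ℝ => x ^ r) A

/-- The `t`-weighted geometric mean `A #_t B = A^{1/2} (A^{-1/2} B A^{-1/2})^t A^{1/2}`. -/
noncomputable def wgeom {n : ℕ} (t : ℝ) (A B : Matrix (Fin n) (Fin n) ℂ) :
    Matrix (Fin n) (Fin n) ℂ :=
  mpow A (1/2) * mpow (mpow A (-(1/2)) * B * mpow A (-(1/2))) t * mpow A (1/2)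

/-- `f` is operator monotone (increasing): order preserving on positive definite
matrices of every size, via the continuous functional calculus. -/
def OperatorMonotone (f : ℝ → ℝ) : Prop :=
  ∀ (n : ℕ) (A B : Matrix (Fin n) (Fin n) ℂ), A.PosDef → B.PosDef →
    MLE A B → MLE (cfc f A) (cfc f B)

/-- `f` is operator monotone decreasing: order reversing on positive definite
matrices of every size, via the continuous functional calculus. -/
def OperatorAntitone (f : ℝ → ℝ) : Prop :=
  ∀ (n : ℕ) (A B : Matrix (Fin n) (Fin n) ℂ), A.PosDef → B.PosDef →
    MLE A B → MLE (cfc f B) (cfc f A)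

theorem aux_fromBlocks {n : ℕ} {A B : Matrix (Fin n) (Fin n) ℂ} (hA : A.PosDef)
    (hB : B.PosDef) : MLE B⁻¹ A⁻¹ ↔ MLE A B := by
  have hBu : IsUnit B := hB.isUnit
  have hAu : IsUnit A := hA.isUnit
  have hAi : A⁻¹.PosDef := hA.inv
  haveI := hBu.invertible
  haveI := hAi.isUnit.invertible
  have h1 := hB.fromBlocks₁₁ (1 : Matrix (Fin n) (Fin n) ℂ) A⁻¹
  have h2 := Matrix.PosDef.fromBlocks₂₂ B (1 : Matrix (Fin n) (Fin n) ℂ) hAi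
  have h3 : A⁻¹⁻¹ = A := Matrix.nonsing_inv_nonsing_inv A ((Matrix.isUnit_iff_isUnit_det A).1 hAu)
  simp only [Matrix.conjTranspose_one, Matrix.one_mul, Matrix.mul_one, h3] at h1 h2
  exact h1.symm.trans h2

theorem aux_spec {n : ℕ} {A : Matrix (Fin n) (Fin n) ℂ} (hA : A.PosDef) :
    ∀ x ∈ spectrum ℝ A, x ∈ Set.Ioi (0:ℝ) := by
  intro x hx
  rw [hA.isHermitian.spectrum_real_eq_range_eigenvalues] at hx
  obtain ⟨i, rfl⟩ := hx
  exact hA.eigenvalues_pos i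

theorem aux_cfc_posDef {n : ℕ} {A : Matrix (Fin n) (Fin n) ℂ} (hA : A.PosDef) (f : ℝ → ℝ)
    (hf : ContinuousOn f (Set.Ioi 0))
    (hf' : ∀ x ∈ Set.Ioi (0:ℝ), f x ∈ Set.Ioi (0:ℝ)) : (cfc f A).PosDef := by
  have hs : IsSelfAdjoint A := hA.isHermitian
  have hH : (cfc f A).IsHermitian := cfc_predicate (p := IsSelfAdjoint) f A
  rw [hH.posDef_iff_eigenvalues_pos]
  intro i
  have hm := hH.eigenvalues_mem_spectrum_real i
  have hc : ContinuousOn f (spectrum ℝ A) := hf.mono (aux_spec hA)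
  rw [cfc_map_spectrum f A hs hc] at hm
  obtain ⟨x, hx, hxe⟩ := hm
  rw [← hxe]
  exact hf' x (aux_spec hA x hx)

theorem aux_adj {n : ℕ} {A : Matrix (Fin n) (Fin n) ℂ} (hA : A.PosDef) (f : ℝ → ℝ)
    (hf : ContinuousOn f (Set.Ioi 0))
    (hf' : ∀ x ∈ Set.Ioi (0:ℝ), f x ∈ Set.Ioi (0:ℝ)) :
    cfc (fun x => (f x⁻¹)⁻¹) A⁻¹ = (cfc f A)⁻¹ := by
  have hs : IsSelfAdjoint A := hA.isHermitian
  have hc : ContinuousOn f (spectrum ℝ A) := hf.mono (aux_spec hA)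
  obtain ⟨u, hu⟩ := hA.isUnit
  have hfin : ((·⁻¹) '' (spectrum ℝ A) : Set ℝ).Finite := (Matrix.finite_real_spectrum).image _
  have h1 := cfc_comp_inv (R := ℝ) (p := IsSelfAdjoint) (fun x => (f x⁻¹)⁻¹) u
    (by rw [hu]; exact hfin.continuousOn _) (by rw [hu]; exact hs)
  have h2 := cfc_inv (R := ℝ) (p := IsSelfAdjoint) f A
    (fun x hx => (hf' x (aux_spec hA x hx)).ne') hc hs
  rw [Matrix.coe_units_inv, hu] at h1
  rw [← h1, Matrix.nonsing_inv_eq_ringInverse, ← h2]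
  simp only [inv_inv]

theorem aux_inv_inv {n : ℕ} {A : Matrix (Fin n) (Fin n) ℂ} (hA : A.PosDef) : A⁻¹⁻¹ = A :=
  Matrix.nonsing_inv_nonsing_inv A ((Matrix.isUnit_iff_isUnit_det A).1 hA.isUnit)

theorem aux_adj2 {n : ℕ} {A : Matrix (Fin n) (Fin n) ℂ} (hA : A.PosDef) (f : ℝ → ℝ)
    (hf : ContinuousOn f (Set.Ioi 0))
    (hf' : ∀ x ∈ Set.Ioi (0:ℝ), f x ∈ Set.Ioi (0:ℝ)) :
    (cfc (fun x => (f x⁻¹)⁻¹) A)⁻¹ = cfc f A⁻¹ := by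
  have h := aux_adj hA.inv f hf hf'
  rw [aux_inv_inv hA] at h
  rw [h, aux_inv_inv (aux_cfc_posDef hA.inv f hf hf')]

theorem stmt_2 (n : ℕ)
    (σ η : Matrix (Fin n) (Fin n) ℂ → Matrix (Fin n) (Fin n) ℂ → Matrix (Fin n) (Fin n) ℂ)
    (hσ : ∀ A B : Matrix (Fin n) (Fin n) ℂ, A.PosDef → B.PosDef → (σ A B).PosDef)
    (hη : ∀ A B : Matrix (Fin n) (Fin n) ℂ, A.PosDef → B.PosDef → (η A B).PosDef)
    (f g h : ℝ → ℝ)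
    (hf : ContinuousOn f (Set.Ioi 0)) (hg : ContinuousOn g (Set.Ioi 0))
    (hh : ContinuousOn h (Set.Ioi 0))
    (hf' : ∀ x ∈ Set.Ioi (0:ℝ), f x ∈ Set.Ioi (0:ℝ))
    (hg' : ∀ x ∈ Set.Ioi (0:ℝ), g x ∈ Set.Ioi (0:ℝ))
    (hh' : ∀ x ∈ Set.Ioi (0:ℝ), h x ∈ Set.Ioi (0:ℝ)) :
    (∀ A B : Matrix (Fin n) (Fin n) ℂ, A.PosDef → B.PosDef →
        MLE (cfc f (σ A B)) (η (cfc g A) (cfc h B))) ↔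
      (∀ A B : Matrix (Fin n) (Fin n) ℂ, A.PosDef → B.PosDef →
        MLE ((η (cfc (fun x => (g x⁻¹)⁻¹) A)⁻¹ (cfc (fun x => (h x⁻¹)⁻¹) B)⁻¹)⁻¹)
          (cfc (fun x => (f x⁻¹)⁻¹) ((σ A⁻¹ B⁻¹)⁻¹))) := by
  have key : ∀ A B : Matrix (Fin n) (Fin n) ℂ, A.PosDef → B.PosDef →
      (MLE ((η (cfc (fun x => (g x⁻¹)⁻¹) A)⁻¹ (cfc (fun x => (h x⁻¹)⁻¹) B)⁻¹)⁻¹)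
          (cfc (fun x => (f x⁻¹)⁻¹) ((σ A⁻¹ B⁻¹)⁻¹)) ↔
        MLE (cfc f (σ A⁻¹ B⁻¹)) (η (cfc g A⁻¹) (cfc h B⁻¹))) := by
    intro A B hA hB
    have hS := hσ _ _ hA.inv hB.inv
    rw [aux_adj2 hA g hg hg', aux_adj2 hB h hh hh', aux_adj hS f hf hf']
    exact aux_fromBlocks (aux_cfc_posDef hS f hf hf')
      (hη _ _ (aux_cfc_posDef hA.inv g hg hg') (aux_cfc_posDef hB.inv h hh hh'))
  constructor
  · intro H A B hA hB
    exact (key A B hA hB).2 (H _ _ hA.inv hB.inv)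
  · intro H A B hA hB
    have := (key _ _ hA.inv hB.inv).1 (H _ _ hA.inv hB.inv)
    rwa [aux_inv_inv hA, aux_inv_inv hB] at this
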